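/- For all integers l ≥ 0 and n ≥ 0, the character of finite Fibonacci-l configurations on n points equals χ^l_n(z,q) = P^l_{n+l}(z,q) = Σ_{m=0}^{⌊(n+l)/(l+1)⌋} z^m q^{(l+1)m(m-1)/2} [n + l - lm choose m]_q in ℤ[z,q]. -/

import Mathlib

open PowerSeries

/-- The set of finite Fibonacci-`l` configurations on `n` points: functions
`a : {0,…,n-1} → {0,1}` (encoded as `Fin n → Bool`) such that `a i + a j ≤ 1`
whenever `1 ≤ |i - j| ≤ l`. -/
def fibSet (l n : ℕ) : Finset (Fin n → Bool) :=
  Finset.univ.filter fun a =>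
    ∀ i j : Fin n, (i : ℕ) < (j : ℕ) → (j : ℕ) ≤ (i : ℕ) + l →
      ¬(a i = true ∧ a j = true)

/-- `(q)_n = ∏_{i=1}^{n} (1 - q^i)`, as a power series in `q` over `ℤ`. -/
noncomputable def qPoch (n : ℕ) : PowerSeries ℤ :=
  ∏ i ∈ Finset.range n, (1 - (PowerSeries.X : PowerSeries ℤ) ^ (i + 1))

/-- The Gaussian binomial coefficient `[N choose m]_q = (q)_N/((q)_m (q)_{N-m})`,
which is `0` when `m > N`; `(q)_m` and `(q)_{N-m}` have constant term `1`, hence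
are invertible, and `Ring.inverse` produces their inverses. -/
noncomputable def qBinom (N m : ℕ) : PowerSeries ℤ :=
  if m ≤ N then qPoch N * Ring.inverse (qPoch m) * Ring.inverse (qPoch (N - m)) else 0

/-- The character `χ^l_n(z,q) = Σ_{a ∈ Fib^l_n} z^{a_0+⋯+a_{n-1}} q^{0·a_0+⋯+(n-1)·a_{n-1}}`,
viewed in the ring `ℤ[[q]][z]` (into which `ℤ[z,q]` embeds), with `z` the
polynomial variable and `q` the power series variable. -/
noncomputable def fibChar (l n : ℕ) : Polynomial (PowerSeries ℤ) :=
  ∑ a ∈ fibSet l n,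
    (Polynomial.X : Polynomial (PowerSeries ℤ)) ^ (Finset.univ.filter fun i => a i = true).card *
      Polynomial.C ((PowerSeries.X : PowerSeries ℤ) ^
        (∑ i ∈ Finset.univ.filter (fun i => a i = true), (i : ℕ)))

/-! Splitting the `l`-sparse subsets `s` of `{0,…,n}` according to whether they contain `n` gives
`χ_{n+1} = χ_n + z q^n χ_{n-l}`, with `n - l` truncated at `0`: if `n ∈ s`, then all other elements
of `s` are less than `n - l`. On the other side, the `q`-Pascal rule gives
`P_{n+l+1} = P_{n+l} + z q^n P_n` coefficientwise in `z`. Since `χ_0 = 1` and `P_N = 1` for all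
`N ≤ l`, induction on `n` yields `χ_n = P_{n+l}`, even where the subtraction truncates. -/

theorem isUnit_qPoch (n : ℕ) : IsUnit (qPoch n) := by
  simp [PowerSeries.isUnit_iff_constantCoeff, qPoch]

theorem qPoch_zero : qPoch 0 = 1 :=
  Finset.prod_range_zero _

theorem qPoch_succ (n : ℕ) : qPoch (n + 1) = qPoch n * (1 - X ^ (n + 1)) :=
  Finset.prod_range_succ _ n

theorem qBinom_eq_zero_of_lt {N m : ℕ} (h : N < m) : qBinom N m = 0 :=
  if_neg h.not_ge

theorem qBinom_zero_right (N : ℕ) : qBinom N 0 = 1 := by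
  simp [qBinom, qPoch_zero, Ring.mul_inverse_cancel, isUnit_qPoch]

theorem qBinom_self (N : ℕ) : qBinom N N = 1 := by
  simp [qBinom, qPoch_zero, Ring.mul_inverse_cancel, isUnit_qPoch]

theorem qBinom_add_mul_qPoch_mul_qPoch (m d : ℕ) :
    qBinom (m + d) m * (qPoch m * qPoch d) = qPoch (m + d) := by
  have hm := Ring.inverse_mul_cancel _ (isUnit_qPoch m)
  have hd := Ring.inverse_mul_cancel _ (isUnit_qPoch d)
  rw [qBinom, if_pos (Nat.le_add_right m d), Nat.add_sub_cancel_left]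
  linear_combination qPoch (m + d) * Ring.inverse (qPoch d) * qPoch d * hm + qPoch (m + d) * hd

theorem qBinom_succ_succ (m d : ℕ) :
    qBinom (m + d + 1) (m + 1) = qBinom (m + d) (m + 1) + X ^ d * qBinom (m + d) m := by
  cases d with
  | zero => simp [qBinom_self, qBinom_eq_zero_of_lt]
  | succ d =>
    have hN := qBinom_add_mul_qPoch_mul_qPoch (m + 1) (d + 1)
    have hm := qBinom_add_mul_qPoch_mul_qPoch (m + 1) d
    have hd := qBinom_add_mul_qPoch_mul_qPoch m (d + 1)
    rw [show m + 1 + (d + 1) = m + (d + 1) + 1 by ring] at hN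
    rw [show m + 1 + d = m + (d + 1) by ring] at hm
    apply ((isUnit_qPoch (m + 1)).mul (isUnit_qPoch (d + 1))).mul_right_cancel
    simp only [qPoch_succ] at hN hm hd ⊢
    linear_combination hN - (1 - X ^ (d + 1)) * hm - X ^ (d + 1) * (1 - X ^ (m + 1)) * hd

theorem qBinom_sub_mul_eq_zero_of_lt {l N m : ℕ} (h : N < (l + 1) * m) :
    qBinom (N - l * m) m = 0 := by
  have hm : 0 < m := Nat.pos_of_mul_pos_left (Nat.zero_lt_of_lt h)
  rw [add_one_mul] at h
  exact qBinom_eq_zero_of_lt (by omega)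

/-- The polynomial `P^l_N(z,q)`, written for all `N` so that its recurrence can be stated; as in
`fibChar`, `z` is the polynomial variable, `q` the power series variable, and `m(m-1)/2` is
encoded as `choose m 2`. -/
noncomputable def fibPoly (l N : ℕ) : Polynomial (PowerSeries ℤ) :=
  ∑ m ∈ Finset.range (N / (l + 1) + 1),
    (Polynomial.X : Polynomial (PowerSeries ℤ)) ^ m *
      Polynomial.C ((PowerSeries.X : PowerSeries ℤ) ^ ((l + 1) * Nat.choose m 2) *
        qBinom (N - l * m) m)

theorem coeff_fibPoly (l N m : ℕ) :
    (fibPoly l N).coeff m = X ^ ((l + 1) * Nat.choose m 2) * qBinom (N - l * m) m := by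
  have hterm (k : ℕ) (c : PowerSeries ℤ) :
      (Polynomial.X ^ k * Polynomial.C c).coeff m = if m = k then c else 0 := by
    rw [mul_comm, Polynomial.coeff_C_mul_X_pow]
  simp only [fibPoly, Polynomial.finsetSum_coeff, hterm, Finset.sum_ite_eq, Finset.mem_range,
    Nat.lt_succ_iff]
  refine ite_eq_left_iff.2 fun h => ?_
  rw [not_le, Nat.div_lt_iff_lt_mul l.succ_pos, mul_comm] at h
  rw [qBinom_sub_mul_eq_zero_of_lt h, mul_zero]

theorem coeff_zero_fibPoly (l N : ℕ) : (fibPoly l N).coeff 0 = 1 := by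
  simp [coeff_fibPoly, qBinom_zero_right]

theorem coeff_succ_fibPoly (l n m : ℕ) :
    (fibPoly l (n + l + 1)).coeff (m + 1) =
      (fibPoly l (n + l)).coeff (m + 1) + X ^ n * (fibPoly l n).coeff m := by
  simp only [coeff_fibPoly]
  rcases lt_or_ge n ((l + 1) * m) with h | h
  · have hmul : (l + 1) * (m + 1) = (l + 1) * m + l + 1 := by ring
    rw [qBinom_sub_mul_eq_zero_of_lt (by omega : n + l + 1 < (l + 1) * (m + 1)),
      qBinom_sub_mul_eq_zero_of_lt (by omega : n + l < (l + 1) * (m + 1)),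
      qBinom_sub_mul_eq_zero_of_lt h]
    simp
  · obtain ⟨d, rfl⟩ := Nat.exists_eq_add_of_le h
    have hchoose : (m + 1).choose 2 = m + m.choose 2 := by
      rw [Nat.choose_succ_succ' m 1, Nat.choose_one_right]
    have htop : (l + 1) * m + d + l + 1 - l * (m + 1) = m + d + 1 :=
      Nat.sub_eq_of_eq_add (by ring)
    have hleft : (l + 1) * m + d + l - l * (m + 1) = m + d := Nat.sub_eq_of_eq_add (by ring)
    have hright : (l + 1) * m + d - l * m = m + d := Nat.sub_eq_of_eq_add (by ring)
    rw [htop, hleft, hright, qBinom_succ_succ, hchoose]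
    ring

theorem fibPoly_add_succ (l n : ℕ) :
    fibPoly l (n + l + 1) =
      fibPoly l (n + l) + Polynomial.X * Polynomial.C (X ^ n) * fibPoly l n := by
  ext1 m
  rw [mul_assoc]
  cases m with
  | zero => simp [coeff_zero_fibPoly]
  | succ m =>
    rw [coeff_succ_fibPoly, Polynomial.coeff_add, Polynomial.coeff_X_mul, Polynomial.coeff_C_mul]

theorem fibPoly_eq_one_of_le {l N : ℕ} (h : N ≤ l) : fibPoly l N = 1 := by
  simp [fibPoly, Nat.div_eq_of_lt (Nat.lt_succ_of_le h), qBinom_zero_right]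

theorem fibPoly_sub_add_self (l n : ℕ) : fibPoly l (n - l + l) = fibPoly l n := by
  rcases le_total l n with h | h
  · rw [Nat.sub_add_cancel h]
  · rw [Nat.sub_eq_zero_of_le h, zero_add, fibPoly_eq_one_of_le h, fibPoly_eq_one_of_le le_rfl]

/-- A set of natural numbers is `l`-sparse if distinct elements are more than `l` apart: the
condition on the set of ones of a Fibonacci-`l` configuration. -/
def IsSparse (l : ℕ) (s : Finset ℕ) : Prop :=
  ∀ i ∈ s, ∀ j ∈ s, i < j → i + l < j

theorem isSparse_empty (l : ℕ) : IsSparse l ∅ := by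
  simp [IsSparse]

theorem isSparse_insert_iff {l n : ℕ} {s : Finset ℕ} (hs : s ⊆ Finset.range n) :
    IsSparse l (insert n s) ↔ s ⊆ Finset.range (n - l) ∧ IsSparse l s := by
  simp only [Finset.subset_iff, Finset.mem_range] at hs ⊢
  constructor
  · intro h
    refine ⟨fun i hi => Nat.lt_sub_of_add_lt ?_, fun i hi j hj => ?_⟩
    · exact h i (Finset.mem_insert_of_mem hi) n (Finset.mem_insert_self n s) (hs hi)
    · exact h i (Finset.mem_insert_of_mem hi) j (Finset.mem_insert_of_mem hj)
  · rintro ⟨hgap, h⟩ i hi j hj hij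
    rcases Finset.mem_insert.1 hj with rfl | hj
    · exact Nat.add_lt_of_lt_sub (hgap (Finset.mem_of_mem_insert_of_ne hi hij.ne))
    · exact h i (Finset.mem_of_mem_insert_of_ne hi (hij.trans (hs hj)).ne) j hj hij

section SparseSum

variable {R : Type*} [CommSemiring R]

open scoped Classical in
/-- The generating function of the `l`-sparse subsets of `{0,…,n-1}`, a set having as weight the
product of the weights `w i` of its elements; `w i = z q^i` gives `χ^l_n(z,q)`. -/
noncomputable def sparseSum (l : ℕ) (w : ℕ → R) (n : ℕ) : R :=
  ∑ s ∈ (Finset.range n).powerset with IsSparse l s, ∏ i ∈ s, w i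

theorem sparseSum_zero (l : ℕ) (w : ℕ → R) : sparseSum l w 0 = 1 := by
  simp [sparseSum, Finset.filter_singleton, isSparse_empty]

theorem sparseSum_succ (l : ℕ) (w : ℕ → R) (n : ℕ) :
    sparseSum l w (n + 1) = sparseSum l w n + w n * sparseSum l w (n - l) := by
  classical
  simp only [sparseSum, Finset.range_add_one, Finset.sum_filter]
  rw [Finset.sum_powerset_insert Finset.notMem_range_self]
  congr 1
  have hinsert : ∀ s ∈ (Finset.range n).powerset,
      (if IsSparse l (insert n s) then ∏ i ∈ insert n s, w i else 0) =
        if s ⊆ Finset.range (n - l) then w n * (if IsSparse l s then ∏ i ∈ s, w i else 0)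
        else 0 := by
    intro s hs
    rw [Finset.mem_powerset] at hs
    have hn : n ∉ s := fun h => Finset.notMem_range_self (hs h)
    simp only [isSparse_insert_iff hs, Finset.prod_insert hn, ite_and, mul_ite, mul_zero]
  have hfilter : (Finset.range n).powerset.filter (· ⊆ Finset.range (n - l)) =
      (Finset.range (n - l)).powerset := by
    ext s
    simp only [Finset.mem_filter, Finset.mem_powerset, and_iff_right_iff_imp]
    exact fun h => h.trans (Finset.range_mono (n.sub_le l))
  rw [Finset.sum_congr rfl hinsert, ← Finset.sum_filter, hfilter, Finset.mul_sum]

end SparseSum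

/-- The set of positions where a configuration takes the value `1`, as a set of natural numbers
rather than of elements of `Fin n` so that configurations of different lengths can be compared. -/
def positions {n : ℕ} (a : Fin n → Bool) : Finset ℕ :=
  (Finset.univ.filter fun i => a i = true).map Fin.valEmbedding

theorem mem_positions {n : ℕ} {a : Fin n → Bool} {k : ℕ} :
    k ∈ positions a ↔ ∃ i : Fin n, a i = true ∧ (i : ℕ) = k := by
  simp [positions]

theorem val_mem_positions {n : ℕ} {a : Fin n → Bool} {i : Fin n} :
    (i : ℕ) ∈ positions a ↔ a i = true := by
  simp [positions, Fin.val_inj]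

theorem positions_subset_range {n : ℕ} (a : Fin n → Bool) : positions a ⊆ Finset.range n := by
  intro k hk
  obtain ⟨i, -, rfl⟩ := mem_positions.1 hk
  exact Finset.mem_range.2 i.isLt

theorem positions_injective (n : ℕ) : Function.Injective (positions (n := n)) := by
  intro a b hab
  funext i
  rw [Bool.eq_iff_iff, ← val_mem_positions, hab, val_mem_positions]

theorem exists_positions_eq {n : ℕ} {s : Finset ℕ} (hs : s ⊆ Finset.range n) :
    ∃ a : Fin n → Bool, positions a = s := by
  refine ⟨fun i => decide ((i : ℕ) ∈ s), ?_⟩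
  ext k
  simp only [mem_positions, decide_eq_true_eq]
  refine ⟨?_, fun hk => ⟨⟨k, Finset.mem_range.1 (hs hk)⟩, hk, rfl⟩⟩
  rintro ⟨i, hi, rfl⟩
  exact hi

theorem isSparse_positions_iff {l n : ℕ} {a : Fin n → Bool} :
    IsSparse l (positions a) ↔ a ∈ fibSet l n := by
  simp only [fibSet, Finset.mem_filter_univ]
  constructor
  · rintro h i j hij hjl ⟨hi, hj⟩
    exact hjl.not_gt (h i (val_mem_positions.2 hi) j (val_mem_positions.2 hj) hij)
  · intro h p hp q hq hpq
    obtain ⟨i, hi, rfl⟩ := mem_positions.1 hp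
    obtain ⟨j, hj, rfl⟩ := mem_positions.1 hq
    exact not_le.1 fun hjl => h i j hpq hjl ⟨hi, hj⟩

theorem prod_positions {M : Type*} [CommMonoid M] {n : ℕ} (a : Fin n → Bool) (f : ℕ → M) :
    ∏ k ∈ positions a, f k = ∏ i : Fin n with a i = true, f i :=
  Finset.prod_map _ _ _

theorem fibChar_eq_sparseSum (l n : ℕ) :
    fibChar l n = sparseSum l (fun i => Polynomial.X * Polynomial.C (X ^ i)) n := by
  refine Finset.sum_nbij positions ?_ (positions_injective n).injOn ?_ ?_
  · intro a ha
    simpa [positions_subset_range, isSparse_positions_iff] using ha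
  · intro s hs
    simp only [Finset.coe_filter, Finset.mem_powerset, Set.mem_ofPred_eq] at hs
    obtain ⟨a, rfl⟩ := exists_positions_eq hs.1
    exact ⟨a, isSparse_positions_iff.1 hs.2, rfl⟩
  · intro a _
    rw [prod_positions]
    simp [Finset.prod_mul_distrib, Finset.prod_pow_eq_pow_sum]

theorem fibChar_zero (l : ℕ) : fibChar l 0 = 1 := by
  rw [fibChar_eq_sparseSum, sparseSum_zero]

theorem fibChar_succ (l n : ℕ) :
    fibChar l (n + 1) =
      fibChar l n + Polynomial.X * Polynomial.C (X ^ n) * fibChar l (n - l) := by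
  simp only [fibChar_eq_sparseSum, sparseSum_succ]

/-- For all `l ≥ 0` and `n ≥ 0`,
`χ^l_n(z,q) = P^l_{n+l}(z,q) = Σ_{m=0}^{⌊(n+l)/(l+1)⌋} z^m q^{(l+1)m(m-1)/2} [n+l-lm choose m]_q`;
here `m(m-1)/2 = choose m 2`. -/
theorem fibChar_eq_P (l n : ℕ) :
    fibChar l n =
      ∑ m ∈ Finset.range ((n + l) / (l + 1) + 1),
        (Polynomial.X : Polynomial (PowerSeries ℤ)) ^ m *
          Polynomial.C ((PowerSeries.X : PowerSeries ℤ) ^ ((l + 1) * Nat.choose m 2) *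
            qBinom (n + l - l * m) m) := by
  change fibChar l n = fibPoly l (n + l)
  induction n using Nat.strong_induction_on with
  | _ n ih =>
    cases n with
    | zero => rw [fibChar_zero, zero_add, fibPoly_eq_one_of_le le_rfl]
    | succ n =>
      calc fibChar l (n + 1)
          = fibChar l n + Polynomial.X * Polynomial.C (X ^ n) * fibChar l (n - l) :=
            fibChar_succ l n
        _ = fibPoly l (n + l) + Polynomial.X * Polynomial.C (X ^ n) * fibPoly l n := by
            rw [ih n n.lt_succ_self, ih (n - l) (Nat.sub_lt_succ n l), fibPoly_sub_add_self]
        _ = fibPoly l (n + 1 + l) := by rw [← fibPoly_add_succ, add_right_comm]
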